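/- Let I ∈ Ins(Ω,H,K) be an indecomposable instrument, I_x(ρ) = K_x ρ K_x* with Kraus operators K_x: H → K. Then I admits a dilation (H_A, W, E), with H_A = ℂ^{|Ω|} having orthonormal basis (φ_x)_{x∈Ω}, W: H → H_A⊗K defined by Wψ = Σ_{x∈Ω} φ_x ⊗ K_x ψ, and E(x) = |φ_x⟩⟨φ_x|, such that the complementary instrument I^C ∈ Ins(Ω,H,H_A) relative to this dilation is the measure-and-prepare instrument I^C_x(ρ) = tr[A^I(x)ρ] |φ_x⟩⟨φ_x| for all x ∈ Ω and all states ρ. -/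

import Mathlib

open scoped Kronecker ComplexOrder
open Matrix

noncomputable section

/-- Linear maps between matrix algebras, representing super-operators
`L(H) → L(K)` for finite-dimensional Hilbert spaces with index types `dH`, `dK`. -/
abbrev MatMap (dH dK : Type) : Type := Matrix dH dH ℂ →ₗ[ℂ] Matrix dK dK ℂ

/-- The positive semidefinite square root of a positive semidefinite matrix
(the definition of the older Mathlib, since removed). -/
def Matrix.PosSemidef.sqrt {n 𝕜 : Type*} [Fintype n] [RCLike 𝕜] [DecidableEq n]
    {A : Matrix n n 𝕜} (hA : A.PosSemidef) : Matrix n n 𝕜 :=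
  hA.1.eigenvectorUnitary.1 * diagonal ((↑) ∘ Real.sqrt ∘ hA.1.eigenvalues) *
    (star hA.1.eigenvectorUnitary : Matrix n n 𝕜)

variable {Ω Λ dH dK dV dA dA' : Type}

/-- The Choi matrix of a super-operator. -/
def choiMatrix [DecidableEq dH] (Φ : MatMap dH dK) : Matrix (dH × dK) (dH × dK) ℂ :=
  fun p q => Φ (Matrix.single p.1 q.1 1) p.2 q.2

/-- Complete positivity of a super-operator (positivity of its Choi matrix). -/
def IsCP [Fintype dH] [DecidableEq dH] [Fintype dK] (Φ : MatMap dH dK) : Prop :=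
  (choiMatrix Φ).PosSemidef

/-- A quantum state: a positive semidefinite matrix of unit trace. -/
def IsState [Fintype dH] (ρ : Matrix dH dH ℂ) : Prop := ρ.PosSemidef ∧ ρ.trace = 1

/-- Trace-nonincreasing super-operator. -/
def IsTNI [Fintype dH] [Fintype dK] (Φ : MatMap dH dK) : Prop :=
  ∀ ρ : Matrix dH dH ℂ, ρ.PosSemidef → (Φ ρ).trace ≤ ρ.trace

/-- Trace-preserving super-operator. -/
def IsTP [Fintype dH] [Fintype dK] (Φ : MatMap dH dK) : Prop :=
  ∀ ρ : Matrix dH dH ℂ, (Φ ρ).trace = ρ.trace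

/-- A quantum instrument with outcome set `Ω` from system `dH` to system `dK`:
a family of completely positive trace-nonincreasing maps summing to a channel. -/
structure Instrument (Ω dH dK : Type) [Fintype Ω] [Fintype dH] [DecidableEq dH]
    [Fintype dK] : Type where
  op : Ω → MatMap dH dK
  cp : ∀ x, IsCP (op x)
  tni : ∀ x, IsTNI (op x)
  tp : IsTP (∑ x, op x)

/-- A quantum channel: a completely positive trace-preserving super-operator. -/
structure Channel (dH dK : Type) [Fintype dH] [DecidableEq dH] [Fintype dK] : Type where
  map : MatMap dH dK
  cp : IsCP map
  tp : IsTP map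

/-- A POVM with outcome set `Ω` on system `d`. -/
structure POVM (Ω d : Type) [Fintype Ω] [Fintype d] [DecidableEq d] : Type where
  elem : Ω → Matrix d d ℂ
  pos : ∀ x, (elem x).PosSemidef
  sum_eq : ∑ x, elem x = 1

/-- The effect (induced POVM element) of an operation `Φ`:
the unique matrix `A` with `tr[A ρ] = tr[Φ ρ]` for all `ρ`. -/
def dualId [Fintype dH] [DecidableEq dH] [Fintype dK] (Φ : MatMap dH dK) :
    Matrix dH dH ℂ :=
  fun i j => (Φ (Matrix.single j i 1)).trace

/-- Partial trace over the first tensor factor. -/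
def ptraceL [Fintype dA] (M : Matrix (dA × dK) (dA × dK) ℂ) : Matrix dK dK ℂ :=
  fun i j => ∑ a, M (a, i) (a, j)

/-- Partial trace over the second tensor factor. -/
def ptraceR [Fintype dV] (M : Matrix (dK × dV) (dK × dV) ℂ) : Matrix dK dK ℂ :=
  fun i j => ∑ b, M (i, b) (j, b)

/-- Compatibility of two instruments: existence of a joint instrument whose
partial-trace marginals (summed over the other outcome) reproduce both instruments
on all states. -/
def InsCompatible [Fintype Ω] [Fintype Λ] [Fintype dH] [DecidableEq dH] [Fintype dK]
    [Fintype dV] (I : Instrument Ω dH dK) (J : Instrument Λ dH dV) : Prop :=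
  ∃ G : Instrument (Ω × Λ) dH (dK × dV),
    (∀ y, ∀ ρ : Matrix dH dH ℂ, IsState ρ → ∑ x, ptraceL (G.op (x, y) ρ) = J.op y ρ) ∧
    (∀ x, ∀ ρ : Matrix dH dH ℂ, IsState ρ → ∑ y, ptraceR (G.op (x, y) ρ) = I.op x ρ)

/-- Compatibility of an instrument and a channel (a one-outcome instrument). -/
def InsChCompatible [Fintype Ω] [Fintype dH] [DecidableEq dH] [Fintype dK] [Fintype dV]
    (I : Instrument Ω dH dK) (Ψ : Channel dH dV) : Prop :=
  ∃ G : Instrument Ω dH (dK × dV),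
    (∀ ρ : Matrix dH dH ℂ, IsState ρ → ∑ x, ptraceL (G.op x ρ) = Ψ.map ρ) ∧
    (∀ x, ∀ ρ : Matrix dH dH ℂ, IsState ρ → ptraceR (G.op x ρ) = I.op x ρ)

/-- Compatibility of two channels. -/
def ChCompatible [Fintype dH] [DecidableEq dH] [Fintype dK] [Fintype dV]
    (Φ : Channel dH dK) (Ψ : Channel dH dV) : Prop :=
  ∃ Γ : Channel dH (dK × dV),
    (∀ ρ : Matrix dH dH ℂ, IsState ρ → ptraceL (Γ.map ρ) = Ψ.map ρ) ∧
    (∀ ρ : Matrix dH dH ℂ, IsState ρ → ptraceR (Γ.map ρ) = Φ.map ρ)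

/-- Compatibility of a POVM and an instrument: existence of a joint instrument `G`
with `∑ x, G.op (x, y) = J.op y` and whose induced POVM has the POVM `A` as a margin. -/
def POVMInsCompatible [Fintype Ω] [Fintype Λ] [Fintype dH] [DecidableEq dH] [Fintype dK]
    (A : POVM Ω dH) (J : Instrument Λ dH dK) : Prop :=
  ∃ G : Instrument (Ω × Λ) dH dK,
    (∀ y, ∑ x, G.op (x, y) = J.op y) ∧
    (∀ x, ∑ y, dualId (G.op (x, y)) = A.elem x)

/-- Compatibility (joint measurability) of two POVMs. -/
def POVMCompatible [Fintype Ω] [Fintype Λ] [Fintype dH] [DecidableEq dH]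
    (A : POVM Ω dH) (B : POVM Λ dH) : Prop :=
  ∃ G : POVM (Ω × Λ) dH,
    (∀ y, ∑ x, G.elem (x, y) = B.elem y) ∧
    (∀ x, ∑ y, G.elem (x, y) = A.elem x)

/-- Compatibility of a POVM and a channel: existence of an instrument implementing both. -/
def POVMChCompatible [Fintype Ω] [Fintype dH] [DecidableEq dH] [Fintype dK]
    (A : POVM Ω dH) (Ψ : Channel dH dK) : Prop :=
  ∃ G : Instrument Ω dH dK,
    (∑ x, G.op x) = Ψ.map ∧ ∀ x, dualId (G.op x) = A.elem x

/-- Instrument postprocessing: `I ⪯ J` if `I_x = ∑ y, R^(y)_x ∘ J_y` for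
a family of instruments `R^(y)`. -/
def Postprocessed [Fintype Ω] [Fintype Λ] [Fintype dH] [DecidableEq dH] [Fintype dK]
    [Fintype dV] [DecidableEq dV] (I : Instrument Ω dH dK) (J : Instrument Λ dH dV) : Prop :=
  ∃ R : Λ → Instrument Ω dV dK, ∀ x, I.op x = ∑ y, (R y).op x ∘ₗ J.op y

/-- An instrument `I` does not disturb an instrument `J`: `J_y ∘ Φ^I = J_y`. -/
def NonDisturbs [Fintype Ω] [Fintype Λ] [Fintype dH] [DecidableEq dH] [Fintype dV]
    (I : Instrument Ω dH dH) (J : Instrument Λ dH dV) : Prop :=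
  ∀ y, J.op y ∘ₗ (∑ x, I.op x) = J.op y

/-- An instrument `I` does not disturb a channel `Ψ`: `Ψ ∘ Φ^I = Ψ`. -/
def InsNonDisturbsCh [Fintype Ω] [Fintype dH] [DecidableEq dH] [Fintype dV]
    (I : Instrument Ω dH dH) (Ψ : Channel dH dV) : Prop :=
  Ψ.map ∘ₗ (∑ x, I.op x) = Ψ.map

/-- An instrument `I` does not disturb a POVM `A`:
the statistics of `A` are unchanged by the channel induced by `I`. -/
def InsNonDisturbsPOVM [Fintype Ω] [Fintype Λ] [Fintype dH] [DecidableEq dH]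
    (I : Instrument Ω dH dH) (A : POVM Λ dH) : Prop :=
  ∀ y, ∀ ρ : Matrix dH dH ℂ,
    (A.elem y * ((∑ x, I.op x) ρ)).trace = (A.elem y * ρ).trace

/-- A POVM `A` does not disturb an instrument `J`: some instrument measuring `A`
does not disturb `J`. -/
def POVMNonDisturbs [Fintype Ω] [Fintype Λ] [Fintype dH] [DecidableEq dH] [Fintype dV]
    (A : POVM Ω dH) (J : Instrument Λ dH dV) : Prop :=
  ∃ I : Instrument Ω dH dH, (∀ x, dualId (I.op x) = A.elem x) ∧ NonDisturbs I J

/-- A POVM `A` does not disturb a channel `Ψ`. -/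
def POVMNonDisturbsCh [Fintype Ω] [Fintype dH] [DecidableEq dH] [Fintype dV]
    (A : POVM Ω dH) (Ψ : Channel dH dV) : Prop :=
  ∃ I : Instrument Ω dH dH, (∀ x, dualId (I.op x) = A.elem x) ∧ InsNonDisturbsCh I Ψ

/-- A POVM `A` does not disturb a POVM `B`. -/
def POVMNonDisturbsPOVM [Fintype Ω] [Fintype Λ] [Fintype dH] [DecidableEq dH]
    (A : POVM Ω dH) (B : POVM Λ dH) : Prop :=
  ∃ I : Instrument Ω dH dH, (∀ x, dualId (I.op x) = A.elem x) ∧ InsNonDisturbsPOVM I B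

/-- A sharp (projection-valued) POVM. -/
def IsSharp [Fintype Ω] [Fintype dH] [DecidableEq dH] (A : POVM Ω dH) : Prop :=
  ∀ x, A.elem x * A.elem x = A.elem x

/-- `(H_A, W, E)` is a dilation of the instrument `I`:
`W` is an isometry `H → H_A ⊗ K` and
`I_x(ρ) = Tr_{H_A}[W ρ W* (E(x) ⊗ 1_K)]` on all states. -/
def IsDilation [Fintype Ω] [Fintype dH] [DecidableEq dH] [Fintype dK] [DecidableEq dK]
    [Fintype dA] [DecidableEq dA] (I : Instrument Ω dH dK)
    (W : Matrix (dA × dK) dH ℂ) (E : POVM Ω dA) : Prop :=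
  Wᴴ * W = 1 ∧
  ∀ x, ∀ ρ : Matrix dH dH ℂ, IsState ρ →
    I.op x ρ = ptraceL (W * ρ * Wᴴ * (E.elem x ⊗ₖ (1 : Matrix dK dK ℂ)))

/-- Minimality of a Stinespring isometry `W : H → H_A ⊗ K`:
the span of `{(1 ⊗ B) W φ}` is everything. -/
def IsMinimalW [Fintype dH] [Fintype dK] [DecidableEq dK] [Fintype dA] [DecidableEq dA]
    (W : Matrix (dA × dK) dH ℂ) : Prop :=
  Submodule.span ℂ {v : (dA × dK) → ℂ |
    ∃ (B : Matrix dK dK ℂ) (φ : dH → ℂ),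
      v = ((1 : Matrix dA dA ℂ) ⊗ₖ B) *ᵥ (W *ᵥ φ)} = ⊤

/-- `IC` is the complementary instrument of the instrument dilated by `(W, E)`:
`IC_x(ρ) = Tr_K[(√E(x) ⊗ 1) W ρ W* (√E(x) ⊗ 1)]`. -/
def IsComplementaryOf [Fintype Ω] [Fintype dH] [DecidableEq dH] [Fintype dK]
    [DecidableEq dK] [Fintype dA] [DecidableEq dA] (W : Matrix (dA × dK) dH ℂ) (E : POVM Ω dA)
    (IC : Instrument Ω dH dA) : Prop :=
  ∀ x, ∀ ρ : Matrix dH dH ℂ,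
    IC.op x ρ =
      ptraceR (((E.pos x).sqrt ⊗ₖ (1 : Matrix dK dK ℂ)) * (W * ρ * Wᴴ) *
        ((E.pos x).sqrt ⊗ₖ (1 : Matrix dK dK ℂ)))

/-- A measure-and-prepare instrument: `I_x(ρ) = tr[A(x) ρ] ξ_x`. -/
def IsMeasureAndPrepare [Fintype Ω] [Fintype dH] [DecidableEq dH] [Fintype dK]
    [DecidableEq dK] (I : Instrument Ω dH dK) : Prop :=
  ∃ (A : POVM Ω dH) (ξ : Ω → Matrix dK dK ℂ),
    (∀ x, IsState (ξ x)) ∧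
    ∀ x, ∀ ρ : Matrix dH dH ℂ, I.op x ρ = ((A.elem x * ρ).trace) • ξ x

/-- A pure state: a state which is a (rank-one) projection. -/
def IsPureState [Fintype dK] (ρ : Matrix dK dK ℂ) : Prop :=
  IsState ρ ∧ ρ * ρ = ρ

/-- A rank-1 POVM: every effect has rank at most one. -/
def IsRankOnePOVM [Fintype Ω] [Fintype dH] [DecidableEq dH] (A : POVM Ω dH) : Prop :=
  ∀ x, (A.elem x).rank ≤ 1

/-- POVM postprocessing: `B(y) = ∑ x, ν x y • A(x)` for a stochastic matrix `ν`. -/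
def POVMPostprocessed [Fintype Ω] [Fintype Λ] [Fintype dH] [DecidableEq dH]
    (B : POVM Λ dH) (A : POVM Ω dH) : Prop :=
  ∃ ν : Ω → Λ → ℝ, (∀ x y, 0 ≤ ν x y) ∧ (∀ x, ∑ y, ν x y = 1) ∧
    ∀ y, B.elem y = ∑ x, (ν x y : ℂ) • A.elem x

/-- A measure-and-prepare instrument preparing pure states. -/
def IsMeasureAndPreparePure [Fintype Ω] [Fintype dH] [DecidableEq dH] [Fintype dK]
    [DecidableEq dK] (I : Instrument Ω dH dK) : Prop :=
  ∃ (A : POVM Ω dH) (ξ : Ω → Matrix dK dK ℂ),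
    (∀ x, IsPureState (ξ x)) ∧
    ∀ x, ∀ ρ : Matrix dH dH ℂ, I.op x ρ = ((A.elem x * ρ).trace) • ξ x

/-!
Viewed as an operator on `ℂ^Ω ⊗ K`, the matrix `W ρ W*` has the diagonal blocks `K_x ρ K_x*`.
Multiplying by `|φ_x⟩⟨φ_x| ⊗ 1` and tracing out `ℂ^Ω` returns the `x`-th block, which is `I_x(ρ)`;
compressing by the same projection, which is its own square root, and tracing out `K` instead
leaves the trace of that block as the weight of `|φ_x⟩⟨φ_x|`.
-/

section SquareRoot

variable {n 𝕜 : Type*} [Fintype n] [DecidableEq n] [RCLike 𝕜] {A : Matrix n n 𝕜}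

theorem sqrt_eigenvalues_of_isIdempotentElem (hA : A.IsHermitian) (h : IsIdempotentElem A)
    (i : n) : √(hA.eigenvalues i) = hA.eigenvalues i := by
  rcases h.spectrum_subset ℝ (hA.eigenvalues_mem_spectrum_real i) with h0 | h1
  · rw [h0, Real.sqrt_zero]
  · rw [h1, Real.sqrt_one]

theorem posSemidef_sqrt_eq_self_of_isIdempotentElem (hA : A.PosSemidef)
    (h : IsIdempotentElem A) : hA.sqrt = A := by
  have hsqrt : Real.sqrt ∘ hA.1.eigenvalues = hA.1.eigenvalues :=
    funext (sqrt_eigenvalues_of_isIdempotentElem hA.1 h)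
  rw [Matrix.PosSemidef.sqrt, hsqrt]
  exact hA.1.spectral_theorem.symm

end SquareRoot

section BasisProjection

variable {n R : Type*} [DecidableEq n]

theorem posSemidef_single_self_one [Finite n] [Ring R] [PartialOrder R] [StarRing R]
    [StarOrderedRing R] (x : n) : (Matrix.single x x (1 : R)).PosSemidef := by
  simpa [single_eq_single_vecMulVec_single] using
    posSemidef_vecMulVec_self_star (Pi.single x (1 : R))

theorem isIdempotentElem_single_self_one [Fintype n] [NonAssocSemiring R] (x : n) :
    IsIdempotentElem (Matrix.single x x (1 : R)) := by
  simp [IsIdempotentElem]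

end BasisProjection

/-- The projective measurement `x ↦ |φ_x⟩⟨φ_x|` in the standard basis of `ℂ^Ω`. -/
def POVM.standardBasis (Ω : Type) [Fintype Ω] [DecidableEq Ω] : POVM Ω Ω where
  elem x := Matrix.single x x 1
  pos := posSemidef_single_self_one
  sum_eq := Matrix.sum_single_one

theorem POVM.sqrt_standardBasis [Fintype Ω] [DecidableEq Ω] (x : Ω) :
    ((standardBasis Ω).pos x).sqrt = Matrix.single x x 1 :=
  posSemidef_sqrt_eq_self_of_isIdempotentElem _ (isIdempotentElem_single_self_one x)

section BlockColumn

variable {ι m n α : Type*}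

/-- The matrix obtained by stacking the blocks `K x` on top of each other. For Kraus operators
this is the Stinespring operator `ψ ↦ ∑ x, φ_x ⊗ K_x ψ`, the tensor product being encoded by
the row index type `ι × m`. -/
def blockColumn (K : ι → Matrix m n α) : Matrix (ι × m) n α :=
  Matrix.of fun p i => K p.1 p.2 i

variable [NonUnitalNonAssocSemiring α] [Star α]

theorem conjTranspose_blockColumn_mul_blockColumn {l : Type*} [Fintype ι] [Fintype m]
    (K : ι → Matrix m n α) (L : ι → Matrix m l α) :
    (blockColumn K)ᴴ * blockColumn L = ∑ x, (K x)ᴴ * L x := by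
  ext i j
  simp [blockColumn, Matrix.mul_apply, Matrix.sum_apply, Fintype.sum_prod_type]

theorem submatrix_blockColumn_mul_mul_conjTranspose {κ l o : Type*} [Fintype n] [Fintype l]
    (K : ι → Matrix m n α) (A : Matrix n l α) (L : κ → Matrix o l α) (x : ι) (y : κ) :
    (blockColumn K * A * (blockColumn L)ᴴ).submatrix (Prod.mk x) (Prod.mk y) =
      K x * A * (L y)ᴴ :=
  rfl

end BlockColumn

section PartialTrace

variable [Fintype dA] [DecidableEq dA] [Fintype dK] [DecidableEq dK]

theorem ptraceL_mul_single_kronecker_one (M : Matrix (dA × dK) (dA × dK) ℂ) (x y : dA) :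
    ptraceL (M * (Matrix.single x y (1 : ℂ) ⊗ₖ (1 : Matrix dK dK ℂ))) =
      M.submatrix (Prod.mk y) (Prod.mk x) := by
  ext k l
  simp [ptraceL, Matrix.mul_apply, Fintype.sum_prod_type, Matrix.single_apply,
    Matrix.one_apply, ite_and]

theorem ptraceR_single_kronecker_one_mul_mul (M : Matrix (dA × dK) (dA × dK) ℂ)
    (a b c d : dA) :
    ptraceR ((Matrix.single a b (1 : ℂ) ⊗ₖ (1 : Matrix dK dK ℂ)) * M *
        (Matrix.single c d (1 : ℂ) ⊗ₖ (1 : Matrix dK dK ℂ))) =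
      (M.submatrix (Prod.mk b) (Prod.mk c)).trace • Matrix.single a d 1 := by
  ext i j
  by_cases hi : a = i <;>
    simp [ptraceR, Matrix.mul_apply, Fintype.sum_prod_type, Matrix.single_apply,
      Matrix.one_apply, ite_and, Matrix.trace, hi]

end PartialTrace

section Operations

variable [Fintype dH] [Fintype dK]

theorem trace_dualId_mul [DecidableEq dH] (Φ : MatMap dH dK) (ρ : Matrix dH dH ℂ) :
    (dualId Φ * ρ).trace = (Φ ρ).trace := by
  suffices h : traceLinearMap dH ℂ ℂ ∘ₗ LinearMap.mulLeft ℂ (dualId Φ) =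
      traceLinearMap dK ℂ ℂ ∘ₗ Φ from LinearMap.congr_fun h ρ
  refine Matrix.ext_linearMap ℂ fun i j => LinearMap.ext_ring ?_
  simp [trace_mul_single, dualId]

theorem sum_conjTranspose_mul_self_eq_one_of_isTP [Fintype Ω] [DecidableEq dH]
    {Φ : Ω → MatMap dH dK} {K : Ω → Matrix dK dH ℂ}
    (hK : ∀ x ρ, Φ x ρ = K x * ρ * (K x)ᴴ) (hΦ : IsTP (∑ x, Φ x)) :
    ∑ x, (K x)ᴴ * K x = 1 := by
  refine ext_iff_trace_mul_right.mpr fun ρ => ?_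
  rw [Matrix.one_mul]
  calc ((∑ x, (K x)ᴴ * K x) * ρ).trace
      = ∑ x, (K x * ρ * (K x)ᴴ).trace := by
        simp only [Matrix.sum_mul, trace_sum, trace_mul_cycle (K _)]
    _ = ((∑ x, Φ x) ρ).trace := by simp only [LinearMap.sum_apply, trace_sum, hK]
    _ = ρ.trace := hΦ ρ

end Operations

theorem indecomposable_complementary_is_measure_and_prepare_general
    [Fintype Ω] [DecidableEq Ω] [Fintype dH] [DecidableEq dH] [Fintype dK] [DecidableEq dK]
    (I : Instrument Ω dH dK) (K : Ω → Matrix dK dH ℂ)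
    (hI : ∀ x, ∀ ρ : Matrix dH dH ℂ, I.op x ρ = K x * ρ * (K x)ᴴ) :
    let W := blockColumn K
    let E := POVM.standardBasis Ω
    Wᴴ * W = 1 ∧
      (∀ x, ∀ ρ : Matrix dH dH ℂ,
        I.op x ρ = ptraceL (W * ρ * Wᴴ * (E.elem x ⊗ₖ (1 : Matrix dK dK ℂ)))) ∧
      ∀ x, ∀ ρ : Matrix dH dH ℂ,
        ptraceR (((E.pos x).sqrt ⊗ₖ (1 : Matrix dK dK ℂ)) * (W * ρ * Wᴴ) *
            ((E.pos x).sqrt ⊗ₖ (1 : Matrix dK dK ℂ))) =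
          ((dualId (I.op x) * ρ).trace) • Matrix.single x x 1 := by
  intro W E
  have block_eq_op (x : Ω) (ρ : Matrix dH dH ℂ) :
      (W * ρ * Wᴴ).submatrix (Prod.mk x) (Prod.mk x) = I.op x ρ := by
    rw [submatrix_blockColumn_mul_mul_conjTranspose, hI]
  refine ⟨?_, fun x ρ => ?_, fun x ρ => ?_⟩
  · rw [conjTranspose_blockColumn_mul_blockColumn,
      sum_conjTranspose_mul_self_eq_one_of_isTP hI I.tp]
  · exact (block_eq_op x ρ).symm.trans (ptraceL_mul_single_kronecker_one _ x x).symm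
  · rw [POVM.sqrt_standardBasis, ptraceR_single_kronecker_one_mul_mul, block_eq_op,
      trace_dualId_mul]

/-- An indecomposable instrument `I_x(ρ) = K_x ρ K_x*` admits the dilation
`(ℂ^Ω, W, E)` with `Wψ = ∑ x, φ_x ⊗ K_x ψ` and `E(x) = |φ_x⟩⟨φ_x|`, whose complementary
instrument is the measure-and-prepare instrument
`I^C_x(ρ) = tr[A^I(x)ρ] |φ_x⟩⟨φ_x|`. -/
theorem indecomposable_complementary_is_measure_and_prepare
    [Fintype Ω] [DecidableEq Ω] [Fintype dH] [DecidableEq dH] [Fintype dK] [DecidableEq dK]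
    (I : Instrument Ω dH dK) (Kr : Ω → Matrix dK dH ℂ)
    (hI : ∀ x, ∀ ρ : Matrix dH dH ℂ, I.op x ρ = Kr x * ρ * (Kr x)ᴴ)
    (W : Matrix (Ω × dK) dH ℂ)
    (hW : W = Matrix.of fun p i => Kr p.1 p.2 i) :
    ∃ E : POVM Ω Ω,
      (∀ x, E.elem x = Matrix.single x x 1) ∧
      IsDilation I W E ∧
      ∀ x, ∀ ρ : Matrix dH dH ℂ, IsState ρ →
        ptraceR (((E.pos x).sqrt ⊗ₖ (1 : Matrix dK dK ℂ)) * (W * ρ * Wᴴ) *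
            ((E.pos x).sqrt ⊗ₖ (1 : Matrix dK dK ℂ))) =
          ((dualId (I.op x) * ρ).trace) • Matrix.single x x 1 := by
  subst hW
  obtain ⟨isometry, dilation, complement⟩ :=
    indecomposable_complementary_is_measure_and_prepare_general I Kr hI
  exact ⟨.standardBasis Ω, fun _ => rfl, ⟨isometry, fun x ρ _ => dilation x ρ⟩,
    fun x ρ _ => complement x ρ⟩
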